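/- Let Y ⊂ P^{r−1} be a subvariety over ℂ of dimension q and degree Δ such that for every subset {i_0,…,i_q} ⊂ {1,…,r} of size q+1 one has Y ∩ {y_{i_0} = 0, …, y_{i_q} = 0} = ∅. Let c⃗ ∈ {0,1}^r be a vector with exactly q entries equal to 1. Then for every integer N > Δ: S_Y(N, c⃗) ≥ (q/(q+1))·N·H_Y(N) − (2q+1)·Δ·H_Y(N). Consequently, (1/q)·S_Y(N, c⃗) − (N/r)·H_Y(N) ≥ (1/(q+1) − 1/r)·N·H_Y(N) − ((2q+1)Δ/q)·H_Y(N). -/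

import Mathlib

open scoped BigOperators

noncomputable section

variable {k : ℕ}

/-- The image of the space of homogeneous polynomials of degree `m` in the homogeneous
coordinate ring `ℂ[y]/I`: the degree-`m` graded piece of the coordinate ring of the
projective variety with homogeneous ideal `I`. -/
def gradedPiece (I : Ideal (MvPolynomial (Fin k) ℂ)) (m : ℕ) :
    Submodule ℂ (MvPolynomial (Fin k) ℂ ⧸ Submodule.restrictScalars ℂ I) :=
  Submodule.map (Submodule.restrictScalars ℂ I).mkQ
    (MvPolynomial.homogeneousSubmodule (Fin k) ℂ m)

/-- The Hilbert function `H_X(m) = dim_ℂ ℂ[y]_m/(I_X)_m` of the projective variety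
`X ⊂ ℙ^{k-1}` with homogeneous ideal `I = I_X`. -/
def hilbertFn (I : Ideal (MvPolynomial (Fin k) ℂ)) (m : ℕ) : ℕ :=
  Module.finrank ℂ (gradedPiece I m)

/-- `A` is a set of exponent vectors of monomials of degree `m` whose residue classes
modulo `I` form a basis of `ℂ[y]_m/(I)_m`. -/
def IsMonomialBasis (I : Ideal (MvPolynomial (Fin k) ℂ)) (m : ℕ)
    (A : Finset (Fin k →₀ ℕ)) : Prop :=
  (∀ a ∈ A, (∑ i, a i) = m) ∧
  LinearIndependent (ι := (A : Set (Fin k →₀ ℕ))) ℂ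
    (fun a => (Submodule.restrictScalars ℂ I).mkQ (MvPolynomial.monomial a.1 (1 : ℂ))) ∧
  Submodule.span ℂ
      ((fun a => (Submodule.restrictScalars ℂ I).mkQ (MvPolynomial.monomial a (1 : ℂ))) '' A)
    = gradedPiece I m

/-- The `m`-th Hilbert weight of the variety with homogeneous ideal `I` with respect to
the weight vector `c`:
`S_X(m, c⃗) = max Σ_{i=1}^{H_X(m)} a⃗^{(i)}·c⃗`, the maximum being over all sets of
monomials `y^{a⃗^{(1)}},…,y^{a⃗^{(H_X(m))}}` whose residue classes modulo `I` form a
basis of `ℂ[y]_m/(I)_m`. -/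
def hilbertWeight (I : Ideal (MvPolynomial (Fin k) ℂ)) (m : ℕ) (c : Fin k → ℝ) : ℝ :=
  sSup {s : ℝ | ∃ A : Finset (Fin k →₀ ℕ), IsMonomialBasis I m A ∧
    s = ∑ a ∈ A, ∑ i, (a i : ℝ) * c i}

end

open Filter

/-!
By Noether normalization, the coordinates `y_t`, `t ∈ T`, with `|T| = q + 1` and no common zero
on `Y`, make the coordinate ring `S` of `Y` a finite extension of the polynomial ring
`A = ℂ[y_t | t ∈ T]`. Choose a linear form `ℓ` generating the fraction field of `S` over that of
`A`, and let `P`, of degree `d`, be its minimal polynomial: `A[ℓ] ⊆ S` is the coordinate ring of a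
hypersurface, with basis the products `y^m ℓ^i`, `i < d`. Comparing Hilbert functions gives `d ≤ Δ`,
and by Euler's formula for the dual of `A[ℓ]` under the trace form, `P'(ℓ) S ⊆ A[ℓ]`, so that
`H_Y(N)` is at most the dimension of the piece of `A[ℓ]` of degree `N + d - 1`.

Each `y^m ℓ^i` of degree `N` is a combination of monomials divisible by `y^m`, hence of weight at
least that of `y^m`. Processing these elements in decreasing order of weight, the exchange lemma
produces a basis of `S_N` consisting of monomials with at least the same total weight. That total
weight is found by symmetry: the `y_t` have equal average exponents.
-/

section Exchange

open Submodule

variable {k V ι κ R : Type*} [DivisionRing k] [AddCommGroup V] [Module k V]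
  [AddCommMonoid R] [LinearOrder R] [IsOrderedAddMonoid R]
  {v : ι → V} {e : κ → V} {w : ι → R} {u : κ → R} {M : Finset ι} {K : Finset κ}

theorem exists_mem_notMem_span_of_card_lt {B : Finset ι} {s : Set ι}
    (he : LinearIndepOn k e K) (hBK : B.card < K.card)
    (hspan : ∀ j ∈ K, e j ∈ span k (v '' s)) : ∃ i ∈ s, v i ∉ span k (v '' B) := by
  classical
  by_contra! hs
  have hle : span k (Set.range fun j : K ↦ e j) ≤ span k (B.image v : Set V) := by
    rw [span_le, Finset.coe_image]
    rintro _ ⟨j, rfl⟩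
    exact span_le.2 (Set.image_subset_iff.2 hs) (hspan j j.2)
  refine hBK.not_ge ?_
  calc K.card = Module.finrank k (span k (Set.range fun j : K ↦ e j)) := by
        exact ((finrank_span_eq_card he).trans (Fintype.card_coe K)).symm
    _ ≤ Module.finrank k (span k (B.image v : Set V)) := finrank_mono hle
    _ ≤ (B.image v).card := finrank_span_finset_le_card _
    _ ≤ B.card := Finset.card_image_le

theorem exists_linearIndepOn_card_eq_sum_le (he : LinearIndepOn k e K)
    (hspan : ∀ j ∈ K, e j ∈ span k (v '' {i | i ∈ M ∧ u j ≤ w i})) :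
    ∃ B ⊆ M, LinearIndepOn k v (B : Set ι) ∧ B.card = K.card ∧
      ∑ j ∈ K, u j ≤ ∑ i ∈ B, w i := by
  classical
  induction K using Finset.induction_on_min_value u with
  | empty => exact ⟨∅, by simp⟩
  | insert a s has hmin ih =>
    obtain ⟨B, hBM, hB, hcard, hsum⟩ := ih (he.mono (by simp))
      fun j hj ↦ hspan j (Finset.mem_insert_of_mem hj)
    have hspan_min : ∀ j ∈ insert a s, e j ∈ span k (v '' {i | i ∈ M ∧ u a ≤ w i}) := by
      intro j hj
      have haj : u a ≤ u j := by
        obtain rfl | hj := Finset.mem_insert.1 hj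
        exacts [le_rfl, hmin j hj]
      have hsub : {i | i ∈ M ∧ u j ≤ w i} ⊆ {i | i ∈ M ∧ u a ≤ w i} :=
        fun i hi ↦ ⟨hi.1, haj.trans hi.2⟩
      exact span_mono (Set.image_mono hsub) (hspan j hj)
    obtain ⟨i, ⟨hiM, hai⟩, hi⟩ := exists_mem_notMem_span_of_card_lt (B := B) he
      (by rw [Finset.card_insert_of_notMem has, hcard]; exact Nat.lt_succ_self _) hspan_min
    have hiB : i ∉ B := fun h ↦ hi (subset_span (Set.mem_image_of_mem v h))
    refine ⟨insert i B, Finset.insert_subset hiM hBM, ?_, ?_, ?_⟩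
    · simpa only [Finset.coe_insert] using hB.insert hi
    · rw [Finset.card_insert_of_notMem hiB, Finset.card_insert_of_notMem has, hcard]
    · rw [Finset.sum_insert hiB, Finset.sum_insert has]
      exact add_le_add hai hsum

theorem exists_linearIndepOn_span_eq_sum_le (hw : ∀ i ∈ M, 0 ≤ w i) (he : LinearIndepOn k e K)
    (hspan : ∀ j ∈ K, e j ∈ span k (v '' {i | i ∈ M ∧ u j ≤ w i})) :
    ∃ B ⊆ M, LinearIndepOn k v (B : Set ι) ∧ span k (v '' B) = span k (v '' M) ∧
      ∑ j ∈ K, u j ≤ ∑ i ∈ B, w i := by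
  classical
  obtain ⟨B₀, hB₀M, hB₀, -, hsum⟩ := exists_linearIndepOn_card_eq_sum_le he hspan
  obtain ⟨B, hBM, hB₀B, hspanB, hB⟩ := exists_linearIndepOn_extension hB₀ (Finset.coe_subset.2 hB₀M)
  lift B to Finset ι using M.finite_toSet.subset hBM
  rw [Finset.coe_subset] at hBM hB₀B
  refine ⟨B, hBM, hB, le_antisymm (span_mono (Set.image_mono (Finset.coe_subset.2 hBM)))
    (span_le.2 hspanB), hsum.trans ?_⟩
  exact Finset.sum_le_sum_of_subset_of_nonneg hB₀B fun i hi _ ↦ hw i (hBM hi)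

end Exchange

section Counting

open Topology
open scoped Nat

theorem card_univ_finsuppAntidiag {τ : Type*} [Fintype τ] [DecidableEq τ] {q : ℕ}
    (hτ : Fintype.card τ = q + 1) (n : ℕ) :
    ((Finset.univ : Finset τ).finsuppAntidiag n).card = (n + q).choose q := by
  rw [Finset.card_finsuppAntidiag_nat_eq_choose, Finset.card_univ, hτ,
    show q + 1 + n - 1 = n + q by lia, Nat.choose_symm_add]

theorem card_mul_sum_apply_finsuppAntidiag {τ : Type*} [Fintype τ] [DecidableEq τ] (n : ℕ) (t : τ) :
    Fintype.card τ * ∑ m ∈ (Finset.univ : Finset τ).finsuppAntidiag n, m t =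
      n * ((Finset.univ : Finset τ).finsuppAntidiag n).card := by
  have hswap : ∀ s, ∑ m ∈ (Finset.univ : Finset τ).finsuppAntidiag n, m s =
      ∑ m ∈ (Finset.univ : Finset τ).finsuppAntidiag n, m t := by
    intro s
    have hmem : ∀ m ∈ (Finset.univ : Finset τ).finsuppAntidiag n,
        m.equivMapDomain (Equiv.swap s t) ∈ (Finset.univ : Finset τ).finsuppAntidiag n := by
      simp only [Finset.mem_finsuppAntidiag, Finset.subset_univ, and_true,
        Finsupp.equivMapDomain_apply]
      exact fun m hm ↦ (Equiv.sum_comp _ m).trans hm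
    refine Finset.sum_nbij' (Finsupp.equivMapDomain (Equiv.swap s t))
      (Finsupp.equivMapDomain (Equiv.swap s t)) hmem hmem ?_ ?_ ?_
    · intro m _; ext; simp
    · intro m _; ext; simp
    · simp
  calc Fintype.card τ * ∑ m ∈ (Finset.univ : Finset τ).finsuppAntidiag n, m t
      = ∑ s, ∑ m ∈ (Finset.univ : Finset τ).finsuppAntidiag n, m s := by
        simp [Finset.sum_congr rfl fun s _ ↦ hswap s]
    _ = ∑ m ∈ (Finset.univ : Finset τ).finsuppAntidiag n, ∑ s, m s := Finset.sum_comm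
    _ = n * ((Finset.univ : Finset τ).finsuppAntidiag n).card := by
        rw [Finset.sum_congr rfl fun m hm ↦ (Finset.mem_finsuppAntidiag.1 hm).1,
          Finset.sum_const, smul_eq_mul, mul_comm]

theorem card_mul_sum_weight_finsuppAntidiag {τ : Type*} [Fintype τ] [DecidableEq τ]
    (c : τ → ℝ) (n : ℕ) :
    Fintype.card τ * ∑ m ∈ (Finset.univ : Finset τ).finsuppAntidiag n, ∑ t, (m t : ℝ) * c t =
      (∑ t, c t) * (n * ((Finset.univ : Finset τ).finsuppAntidiag n).card) := by
  rw [Finset.sum_comm, Finset.mul_sum, Finset.sum_mul]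
  refine Finset.sum_congr rfl fun t _ ↦ ?_
  rw [← Finset.sum_mul, ← mul_assoc, mul_comm (c t)]
  exact_mod_cast congr($(card_mul_sum_apply_finsuppAntidiag n t) * c t)

theorem add_one_mul_choose_add_one (n q : ℕ) :
    ((q : ℝ) + 1) * (n + (q + 1)).choose (q + 1) = (n + q + 1) * (n + q).choose q := by
  rw [mul_comm, ← add_assoc]
  exact_mod_cast (Nat.add_one_mul_choose_eq (n + q) q).symm

theorem sub_mul_choose_add_le (n s q : ℕ) :
    ((n : ℝ) - q * s) * (n + s + q).choose q ≤ n * (n + q).choose q := by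
  induction q with
  | zero => simp
  | succ q ih =>
    have hfactor : ((n : ℝ) - (q + 1) * s) * (n + s + q + 1) ≤ (n - q * s) * (n + q + 1) := by
      have : (0 : ℝ) ≤ (q + 1) * s * (s + 1) := by positivity
      linear_combination this
    refine le_of_mul_le_mul_left ?_ (by positivity : (0 : ℝ) < q + 1)
    have hshift := add_one_mul_choose_add_one (n + s) q
    push_cast at hshift ⊢
    calc ((q : ℝ) + 1) * ((n - (q + 1) * s) * (n + s + (q + 1)).choose (q + 1))
        = (n - (q + 1) * s) * (n + s + q + 1) * (n + s + q).choose q := by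
          rw [mul_left_comm, hshift, mul_assoc]
      _ ≤ (n - q * s) * (n + q + 1) * (n + s + q).choose q := by gcongr
      _ = (n + q + 1) * ((n - q * s) * (n + s + q).choose q) := by ring
      _ ≤ (n + q + 1) * (n * (n + q).choose q) := by gcongr
      _ = (q + 1) * (n * (n + (q + 1)).choose (q + 1)) := by
          rw [mul_left_comm _ (n : ℝ), ← add_one_mul_choose_add_one, mul_left_comm]

theorem tendsto_factorial_mul_choose_div_pow (q i : ℕ) :
    Tendsto (fun n : ℕ ↦ (q ! : ℝ) * (n - i + q).choose q / n ^ q) atTop (𝓝 1) := by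
  induction q with
  | zero => simp
  | succ q ih =>
    have hlin : Tendsto (fun n : ℕ ↦ 1 + ((q : ℝ) + 1 - i) / n) atTop (𝓝 1) := by
      simpa using (tendsto_const_div_atTop_nhds_zero_nat ((q : ℝ) + 1 - i)).const_add 1
    have hprod := ih.mul hlin
    rw [one_mul] at hprod
    refine hprod.congr' ?_
    filter_upwards [eventually_ge_atTop (i + 1)] with n hn
    have hn₀ : (n : ℝ) ≠ 0 := by exact_mod_cast (by lia : n ≠ 0)
    have hrec := add_one_mul_choose_add_one (n - i) q
    rw [Nat.cast_sub (by lia)] at hrec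
    rw [Nat.factorial_succ]
    push_cast
    rw [mul_right_comm, hrec]
    field_simp
    ring

theorem sub_mul_sum_choose_add_le (q : ℕ) {d n : ℕ} (hd : d ≤ n + 1) :
    ((n : ℝ) - (q + 1) * (d - 1)) * ∑ i ∈ Finset.range d, ((n + (d - 1) - i + q).choose q : ℝ) ≤
      ∑ i ∈ Finset.range d, (n - i : ℕ) * ((n - i + q).choose q : ℝ) := by
  rw [Finset.mul_sum]
  refine Finset.sum_le_sum fun i hi ↦ ?_
  obtain ⟨e, rfl⟩ : ∃ e, d = i + e + 1 := Nat.exists_eq_add_of_lt (Finset.mem_range.1 hi)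
  obtain ⟨m, rfl⟩ : ∃ m, n = i + m := Nat.exists_eq_add_of_le (by lia)
  refine le_trans ?_ (sub_mul_choose_add_le (i + m - i) (i + e) q)
  rw [show i + m + (i + e + 1 - 1) - i = i + m - i + (i + e) by lia, Nat.add_sub_cancel_left]
  refine mul_le_mul_of_nonneg_right ?_ (by positivity)
  push_cast
  have : (0 : ℝ) ≤ e := by positivity
  linear_combination this

end Counting

section HomogeneousPolynomials

open Submodule MvPolynomial

variable {k τ : Type*} [Field k]

theorem mem_univ_finsuppAntidiag_iff_degree_eq [Fintype τ] [DecidableEq τ] {n : ℕ} {m : τ →₀ ℕ} :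
    m ∈ (Finset.univ : Finset τ).finsuppAntidiag n ↔ m.degree = n := by
  simp [Finset.mem_finsuppAntidiag, Finsupp.degree_eq_sum]

instance [Finite τ] (n : ℕ) : FiniteDimensional k (homogeneousSubmodule τ k n) :=
  Module.Finite.iff_fg.2 (homogeneousSubmodule_fg ..)

theorem homogeneousSubmodule_eq_span_monomial (n : ℕ) :
    homogeneousSubmodule τ k n = span k ((monomial · 1) '' {m | m.degree = n}) := by
  rw [homogeneousSubmodule_eq_finsupp_supported]
  exact restrictSupport_eq_span k _

theorem finrank_homogeneousSubmodule [Fintype τ] {q : ℕ} (hτ : Fintype.card τ = q + 1) (n : ℕ) :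
    Module.finrank k (homogeneousSubmodule τ k n) = (n + q).choose q := by
  classical
  have hset : {m : τ →₀ ℕ | m.degree = n} = (Finset.univ : Finset τ).finsuppAntidiag n :=
    Set.ext fun m ↦ mem_univ_finsuppAntidiag_iff_degree_eq.symm
  rw [homogeneousSubmodule_eq_finsupp_supported, hset, ← restrictSupport,
    Module.finrank_eq_card_basis (basisRestrictSupport k _), ← card_univ_finsuppAntidiag hτ]
  simp

theorem finrank_map_add_finrank_le_of_mem_ker [Finite τ] {R : Type*} [CommRing R] [Algebra k R]
    {f : MvPolynomial τ k →ₐ[k] R} {g : MvPolynomial τ k} {e : ℕ} (hg : g.IsHomogeneous e)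
    (hg₀ : g ≠ 0) (hgf : f g = 0) (j : ℕ) :
    Module.finrank k ((homogeneousSubmodule τ k (j + e)).map f.toLinearMap) +
        Module.finrank k (homogeneousSubmodule τ k j) ≤
      Module.finrank k (homogeneousSubmodule τ k (j + e)) := by
  let f' := f.toLinearMap.domRestrict (homogeneousSubmodule τ k (j + e))
  have hmul (a : homogeneousSubmodule τ k j) : a * g ∈ homogeneousSubmodule τ k (j + e) :=
    IsHomogeneous.mul (mem_homogeneousSubmodule j _ |>.1 a.2) hg
  let mulG : homogeneousSubmodule τ k j →ₗ[k] LinearMap.ker f' :=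
    (((LinearMap.mulRight k g).domRestrict _).codRestrict _ hmul).codRestrict _ fun a ↦ by
      change f (a * g) = 0
      rw [map_mul, hgf, mul_zero]
  have hinj : Function.Injective mulG := fun a b hab ↦
    Subtype.ext (mul_right_cancel₀ hg₀ congr(($hab : MvPolynomial τ k)))
  rw [← LinearMap.finrank_range_add_finrank_ker f', ← LinearMap.range_domRestrict]
  gcongr
  exact LinearMap.finrank_le_finrank_of_injective hinj

theorem finrank_le_mul_finrank_of_le_mul {S : Type*} [CommRing S] [Algebra k S]
    {P Q W : Submodule k S} [FiniteDimensional k P] [FiniteDimensional k Q] (hW : W ≤ P * Q) :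
    Module.finrank k W ≤ Module.finrank k P * Module.finrank k Q := by
  rw [← mulMap_range] at hW
  rw [← Module.finrank_tensorProduct]
  exact (finrank_mono hW).trans (LinearMap.finrank_range_le _)

end HomogeneousPolynomials

section NoetherNormalization

open Submodule MvPolynomial DirectSum Topology
open scoped Nat

variable {k S τ : Type*} [Field k] [CommRing S] [Algebra k S] (𝒮 : ℕ → Submodule k S)
  [GradedAlgebra 𝒮]

theorem exists_mem_sum_mul_eq_of_mem_span [Fintype τ] {y : τ → S} {m n : ℕ} {s : S}
    (hy : ∀ t, y t ∈ 𝒮 m) (hs : s ∈ 𝒮 (n + m)) (hsy : s ∈ Ideal.span (Set.range y)) :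
    ∃ a : τ → S, (∀ t, a t ∈ 𝒮 n) ∧ ∑ t, a t * y t = s := by
  obtain ⟨b, hb⟩ := Ideal.mem_span_range_iff_exists_fun.1 hsy
  refine ⟨fun t ↦ decompose 𝒮 (b t) n, fun t ↦ SetLike.coe_mem _, ?_⟩
  calc ∑ t, (decompose 𝒮 (b t) n : S) * y t
      = ∑ t, (decompose 𝒮 (b t * y t) (n + m) : S) :=
        Finset.sum_congr rfl fun t _ ↦ (coe_decompose_mul_add_of_right_mem 𝒮 (hy t)).symm
    _ = decompose 𝒮 (∑ t, b t * y t) (n + m) := by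
        rw [decompose_sum, DFinsupp.finsetSum_apply, AddSubmonoidClass.coe_finsetSum]
    _ = s := by rw [hb, decompose_of_mem_same 𝒮 hs]

variable {𝒮} {f : MvPolynomial τ k →ₐ[k] S} (hX : ∀ t, f (X t) ∈ 𝒮 1)
include hX

theorem mem_of_isHomogeneous {a : MvPolynomial τ k} {n : ℕ} (ha : a.IsHomogeneous n) :
    f a ∈ 𝒮 n := by
  have hle : homogeneousSubmodule τ k n ≤ (𝒮 n).comap f.toLinearMap := by
    rw [homogeneousSubmodule_eq_span_monomial, span_le]
    rintro _ ⟨m, rfl, rfl⟩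
    have hprod := SetLike.prod_pow_mem_graded 𝒮 1 _ m fun t (_ : t ∈ m.support) ↦ hX t
    simp only [← map_pow, ← map_prod, smul_eq_mul, Pi.one_apply, mul_one] at hprod
    simp only [SetLike.mem_coe, monomial_eq, C_1, one_mul]
    exact hprod
  exact hle ha

theorem coe_decompose_apply (a : MvPolynomial τ k) (n : ℕ) :
    (decompose 𝒮 (f a) n : S) = f (homogeneousComponent n a) := by
  have hmem (j : ℕ) : f (homogeneousComponent j a) ∈ 𝒮 j :=
    mem_of_isHomogeneous hX (homogeneousComponent_isHomogeneous j a)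
  conv_lhs => rw [← sum_homogeneousComponent a]
  rw [map_sum, decompose_sum, DFinsupp.finsetSum_apply, AddSubmonoidClass.coe_finsetSum,
    Finset.sum_eq_single n fun j _ hj ↦ decompose_of_mem_ne 𝒮 (hmem j) hj]
  · exact decompose_of_mem_same 𝒮 (hmem n)
  · intro hn
    rw [homogeneousComponent_eq_zero _ _ (by simpa using hn), map_zero, decompose_zero]
    rfl

theorem exists_isHomogeneous_ne_zero_apply_eq_zero (hf : ¬Function.Injective f) :
    ∃ e, ∃ g : MvPolynomial τ k, g.IsHomogeneous e ∧ g ≠ 0 ∧ f g = 0 := by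
  rw [injective_iff_map_eq_zero] at hf
  push Not at hf
  obtain ⟨g, hfg, hg⟩ := hf
  obtain ⟨e, he⟩ : ∃ e, homogeneousComponent e g ≠ 0 := by
    by_contra! h
    exact hg (by rw [← sum_homogeneousComponent g, Finset.sum_eq_zero fun e _ ↦ h e])
  refine ⟨e, _, homogeneousComponent_isHomogeneous e g, he, ?_⟩
  rw [← coe_decompose_apply hX, hfg, decompose_zero]
  rfl

variable {E : ℕ}
  (hE : ∀ n > E, ∀ s ∈ 𝒮 n, s ∈ Ideal.span (Set.range fun t ↦ f (X t)))
include hE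

theorem le_map_homogeneousSubmodule_mul [Finite τ] (j : ℕ) :
    𝒮 (E + j) ≤ (homogeneousSubmodule τ k j).map f.toLinearMap * 𝒮 E := by
  cases nonempty_fintype τ
  induction j with
  | zero => simp [homogeneousSubmodule_zero, Submodule.map_one]
  | succ j ih =>
    intro s hs
    obtain ⟨a, ha, rfl⟩ := exists_mem_sum_mul_eq_of_mem_span 𝒮 (n := E + j) hX hs
      (hE _ (by lia) s hs)
    have hle : (homogeneousSubmodule τ k 1).map f.toLinearMap *
        (homogeneousSubmodule τ k j).map f.toLinearMap ≤
          (homogeneousSubmodule τ k (j + 1)).map f.toLinearMap := by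
      rw [← Submodule.map_mul, add_comm]
      exact Submodule.map_mono (homogeneousSubmodule_mul 1 j)
    refine sum_mem fun t _ ↦ mul_le_mul_left hle _ ?_
    rw [mul_assoc, mul_comm (a t)]
    exact Submodule.mul_mem_mul (mem_map_of_mem (f := f.toLinearMap) (isHomogeneous_X k t))
      (ih (ha t))

variable [∀ n, FiniteDimensional k (𝒮 n)]

theorem finite_of_forall_mem_span [Finite τ] : f.Finite := by
  let _ := f.toRingHom.toAlgebra
  have : IsScalarTower k (MvPolynomial τ k) S := .of_algebraMap_eq' f.comp_algebraMap.symm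
  let F := ⨆ n : Fin (E + 1), 𝒮 n
  have hF : FiniteDimensional k F := by infer_instance
  have hle (n : ℕ) : 𝒮 n ≤ (span (MvPolynomial τ k) (F : Set S)).restrictScalars k := by
    have h₀ (m : ℕ) (hm : m ≤ E) : 𝒮 m ≤ F := le_iSup (fun i : Fin (E + 1) ↦ 𝒮 i) ⟨m, by lia⟩
    obtain hn | hn := le_total n E
    · exact (h₀ n hn).trans subset_span
    obtain ⟨j, rfl⟩ := Nat.exists_eq_add_of_le hn
    refine (le_map_homogeneousSubmodule_mul hX hE j).trans (mul_le.2 ?_)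
    rintro _ ⟨a, -, rfl⟩ s hs
    exact smul_mem _ a (subset_span (h₀ E le_rfl hs))
  refine ⟨?_⟩
  have htop : span (MvPolynomial τ k) (F : Set S) = ⊤ := by
    rw [← restrictScalars_eq_top_iff k, eq_top_iff,
      ← (Decomposition.isInternal 𝒮).submodule_iSup_eq_top]
    exact iSup_le hle
  obtain ⟨G, hG⟩ := Module.Finite.iff_fg.1 hF
  exact ⟨G, by rw [← htop, ← hG, span_span_of_tower]⟩

theorem injective_of_tendsto_finrank [Fintype τ] {q : ℕ} (hτ : Fintype.card τ = q + 1) {Δ : ℝ}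
    (hΔ : Δ ≠ 0)
    (hHilb : Tendsto (fun n : ℕ ↦ (q ! : ℝ) * Module.finrank k (𝒮 n) / (n : ℝ) ^ q) atTop (𝓝 Δ)) :
    Function.Injective f := by
  by_contra hf
  obtain ⟨e, g, hg, hg₀, hfg⟩ := exists_isHomogeneous_ne_zero_apply_eq_zero hX hf
  have hle {n : ℕ} (hn : E + e ≤ n) : (Module.finrank k (𝒮 n) : ℝ) ≤
      ((n - E + q).choose q - (n - (E + e) + q).choose q) * Module.finrank k (𝒮 E) := by
    obtain ⟨j, rfl⟩ := Nat.exists_eq_add_of_le hn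
    have hmap := finrank_map_add_finrank_le_of_mem_ker hg hg₀ hfg j
    rw [finrank_homogeneousSubmodule hτ, finrank_homogeneousSubmodule hτ] at hmap
    rw [show E + e + j - E = j + e by lia, Nat.add_sub_cancel_left]
    calc (Module.finrank k (𝒮 (E + e + j)) : ℝ)
      _ ≤ Module.finrank k ((homogeneousSubmodule τ k (j + e)).map f.toLinearMap) *
            Module.finrank k (𝒮 E) := by
        rw [add_assoc, add_comm e]
        exact_mod_cast finrank_le_mul_finrank_of_le_mul
          (le_map_homogeneousSubmodule_mul hX hE (j + e))
      _ ≤ _ := by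
        gcongr
        rw [le_sub_iff_add_le]
        exact_mod_cast hmap
  have hlim : Tendsto (fun n : ℕ ↦ ((q ! : ℝ) * (n - E + q).choose q / n ^ q -
      q ! * (n - (E + e) + q).choose q / n ^ q) * Module.finrank k (𝒮 E)) atTop (𝓝 0) := by
    simpa using ((tendsto_factorial_mul_choose_div_pow q E).sub
      (tendsto_factorial_mul_choose_div_pow q (E + e))).mul_const (Module.finrank k (𝒮 E) : ℝ)
  refine hΔ (tendsto_nhds_unique hHilb (squeeze_zero' (.of_forall fun n ↦ by positivity) ?_ hlim))
  filter_upwards [eventually_ge_atTop (E + e)] with n hn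
  rw [← sub_div, ← mul_sub, div_mul_eq_mul_div, mul_assoc]
  gcongr
  exact hle hn

end NoetherNormalization

section PrimitiveElement

open Submodule
open Polynomial (aeval derivative derivative_map aeval_map_algebraMap aeval_algebraMap_apply)

theorem exists_adjoin_simple_sum_smul_eq_top {k K L ι : Type*} [Field k] [Infinite k] [Field K]
    [Field L] [Algebra k K] [Algebra k L] [Algebra K L] [IsScalarTower k K L]
    [FiniteDimensional K L] [Algebra.IsSeparable K L] [Fintype ι] {y : ι → L}
    (hy : IntermediateField.adjoin K (Set.range y) = ⊤) :
    ∃ c : ι → k, IntermediateField.adjoin K {∑ i, c i • y i} = ⊤ := by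
  classical
  have : Finite (IntermediateField K L) :=
    Field.finite_intermediateField_of_exists_primitive_element K L
      (Field.exists_primitive_element K L)
  let W (E : IntermediateField K L) : Submodule k (ι → k) :=
    (E.toSubalgebra.toSubmodule.restrictScalars k).comap (Fintype.linearCombination k y)
  have hW {E : IntermediateField K L} {c : ι → k} : c ∈ W E ↔ ∑ i, c i • y i ∈ E := by
    simp [W, Fintype.linearCombination_apply]
  have hW_top {E : IntermediateField K L} (hE : W E = ⊤) : E = ⊤ := by
    rw [← top_le_iff, ← hy, IntermediateField.adjoin_le_iff]
    rintro _ ⟨i, rfl⟩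
    simpa [Pi.single_apply] using hW.1 (hE ▸ mem_top : Pi.single i (1 : k) ∈ W E)
  by_contra! hne
  obtain ⟨E, hE⟩ := Subspace.exists_eq_top_of_iUnion_eq_univ
    (p := fun E : {E : IntermediateField K L // E ≠ ⊤} ↦ W E) <|
    Set.eq_univ_of_forall fun c ↦ Set.mem_iUnion.2
      ⟨⟨_, hne c⟩, hW.2 (IntermediateField.mem_adjoin_simple_self K _)⟩
  exact E.2 (hW_top hE)

theorem aeval_derivative_minpoly_mul_mem_adjoin_of_isIntegral {A K L : Type*} [CommRing A]
    [IsDomain A] [IsIntegrallyClosed A] [Field K] [Algebra A K] [IsFractionRing A K] [Field L]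
    [Algebra K L] [Algebra A L] [IsScalarTower A K L] [FiniteDimensional K L]
    [Algebra.IsSeparable K L] {x s : L} (hx : Algebra.adjoin K {x} = ⊤) (hAx : IsIntegral A x)
    (hAs : IsIntegral A s) :
    aeval x (derivative (minpoly K x)) * s ∈ Algebra.adjoin A {x} := by
  have hdual : s ∈ (Algebra.traceForm K L).dualSubmodule
      (Subalgebra.toSubmodule (Algebra.adjoin A {x})) := by
    rw [LinearMap.BilinForm.mem_dualSubmodule]
    intro z hz
    have hAz : IsIntegral A z :=
      (Algebra.adjoin_le (Set.singleton_subset_iff.2 hAx) :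
        Algebra.adjoin A {x} ≤ integralClosure A L) hz
    rw [Algebra.traceForm_apply, Submodule.mem_one]
    exact IsIntegrallyClosed.isIntegral_iff.1 (Algebra.isIntegral_trace (hAs.mul hAz))
  have hne : aeval x (derivative (minpoly K x)) ≠ 0 :=
    (Algebra.IsSeparable.isSeparable K x).aeval_derivative_ne_zero (minpoly.aeval K x)
  rwa [traceForm_dualSubmodule_adjoin A K hx hAx, mem_smul_iff_inv_mul_mem (inv_ne_zero hne),
    inv_inv] at hdual

theorem adjoin_range_algebraMap_comp_eq_top {A S K L ι : Type*}
    [CommRing A] [CommRing S] [Algebra A S] [Field K] [Algebra A K] [Field L]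
    [Algebra S L] [IsFractionRing S L] [Algebra K L] [Algebra A L] [IsScalarTower A K L]
    [IsScalarTower A S L] {y : ι → S} (hy : Algebra.adjoin A (Set.range y) = ⊤) :
    IntermediateField.adjoin K (Set.range (algebraMap S L ∘ y)) = ⊤ := by
  let F := IntermediateField.adjoin K (Set.range (algebraMap S L ∘ y))
  have hle : Algebra.adjoin A (Set.range y) ≤
      (F.toSubalgebra.restrictScalars A).comap (IsScalarTower.toAlgHom A S L) := by
    rw [Algebra.adjoin_le_iff]
    rintro _ ⟨i, rfl⟩
    exact IntermediateField.subset_adjoin K _ ⟨i, rfl⟩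
  have hF (s : S) : algebraMap S L s ∈ F := hle (hy ▸ Algebra.mem_top)
  rw [eq_top_iff]
  intro z _
  obtain ⟨a, b, -, rfl⟩ := IsFractionRing.div_surjective (A := S) z
  exact div_mem (hF a) (hF b)

section

variable {A S : Type*} [CommRing A] [IsDomain A] [IsIntegrallyClosed A] [CommRing S]
  [IsDomain S] [Algebra A S]

theorem algebraMap_aeval_derivative_minpoly (K : Type*) {L : Type*} [Field K] [Algebra A K]
    [IsFractionRing A K] [Field L] [Algebra S L] [Algebra K L] [Algebra A L] [IsScalarTower A K L]
    [IsScalarTower A S L] {x : S} (hAx : IsIntegral A x) :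
    algebraMap S L (aeval x (derivative (minpoly A x))) =
      aeval (algebraMap S L x) (derivative (minpoly K (algebraMap S L x))) := by
  rw [minpoly.isIntegrallyClosed_eq_field_fractions K L hAx, derivative_map,
    aeval_map_algebraMap, aeval_algebraMap_apply]

theorem aeval_derivative_minpoly_ne_zero [CharZero A] [FaithfulSMul A S] {x : S}
    (hAx : IsIntegral A x) : aeval x (derivative (minpoly A x)) ≠ 0 := by
  have hne : derivative (minpoly A x) ≠ 0 := fun h ↦
    (minpoly.natDegree_pos hAx).ne' (Polynomial.derivative_eq_zero.1 h)
  exact fun h ↦ (Polynomial.degree_derivative_lt (minpoly.ne_zero hAx)).not_ge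
    (minpoly.IsIntegrallyClosed.degree_le_of_ne_zero hne h)

theorem exists_aeval_derivative_minpoly_sum_smul_mul_mem_adjoin {k ι : Type*} [Field k] [CharZero k]
    [Algebra k A] [Algebra k S] [IsScalarTower k A S] [Module.Finite A S] [FaithfulSMul A S]
    [Fintype ι] {y : ι → S} (hy : Algebra.adjoin A (Set.range y) = ⊤) :
    ∃ c : ι → k, ∀ s, aeval (∑ i, c i • y i) (derivative (minpoly A (∑ i, c i • y i))) * s ∈
      Algebra.adjoin A {∑ i, c i • y i} := by
  let K := FractionRing A
  let L := FractionRing S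
  let _ : Algebra K L := FractionRing.liftAlgebra A L
  have hint (s : S) : IsIntegral A s := Algebra.IsIntegral.isIntegral s
  have : CharZero K := charZero_of_injective_algebraMap (algebraMap k K).injective
  obtain ⟨c, hc⟩ := exists_adjoin_simple_sum_smul_eq_top (k := k)
    (adjoin_range_algebraMap_comp_eq_top (K := K) (L := L) hy)
  refine ⟨c, fun s ↦ ?_⟩
  set x := ∑ i, c i • y i with hx
  have hxL : ∑ i, c i • (algebraMap S L ∘ y) i = algebraMap S L x := by
    simp [hx, Algebra.algebraMap_eq_smul_one]
  rw [hxL, IntermediateField.adjoin_simple_eq_top_iff_of_isAlgebraic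
    (Algebra.IsAlgebraic.isAlgebraic _)] at hc
  have hmem := aeval_derivative_minpoly_mul_mem_adjoin_of_isIntegral hc ((hint x).algebraMap)
    ((hint s).algebraMap)
  rw [← algebraMap_aeval_derivative_minpoly K (hint x), ← map_mul,
    ← IsScalarTower.coe_toAlgHom' A S L, ← AlgHom.map_adjoin_singleton] at hmem
  obtain ⟨z, hz, hzx⟩ := hmem
  rwa [← IsFractionRing.injective S L hzx]
end

end PrimitiveElement

section StandardExponents

variable {τ : Type*} [Fintype τ] [DecidableEq τ]

/-- The exponents `(i, m)` of the monomials `x ^ i * y ^ m` of degree `n` with `i < d`, where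
`y` is indexed by `τ`. Since `n - i` is truncated, this reading requires `d ≤ n + 1`. -/
def standardExponents (τ : Type*) [Fintype τ] [DecidableEq τ] (d n : ℕ) :
    Finset (Σ _ : ℕ, τ →₀ ℕ) :=
  (Finset.range d).sigma fun i ↦ Finset.univ.finsuppAntidiag (n - i)

theorem mem_standardExponents {d n : ℕ} {j : Σ _ : ℕ, τ →₀ ℕ} :
    j ∈ standardExponents τ d n ↔ j.1 < d ∧ j.2.degree = n - j.1 := by
  simp [standardExponents, ← mem_univ_finsuppAntidiag_iff_degree_eq]

theorem card_standardExponents {q : ℕ} (hτ : Fintype.card τ = q + 1) (d n : ℕ) :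
    (standardExponents τ d n).card = ∑ i ∈ Finset.range d, (n - i + q).choose q := by
  simp_rw [standardExponents, Finset.card_sigma, card_univ_finsuppAntidiag hτ]

theorem mul_card_standardExponents_le_sum_weight {q d n : ℕ} (hτ : Fintype.card τ = q + 1)
    {c : τ → ℝ} (hc : ∀ t, 0 ≤ c t) (hd : d ≤ n + 1) :
    (∑ t, c t) * (n / (q + 1) - (d - 1)) * (standardExponents τ d (n + (d - 1))).card ≤
      ∑ j ∈ standardExponents τ d n, ∑ t, (j.2 t : ℝ) * c t := by
  refine le_of_mul_le_mul_left ?_ (by positivity : (0 : ℝ) < q + 1)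
  have hweight (i : ℕ) := card_mul_sum_weight_finsuppAntidiag c (n - i)
  simp only [hτ, card_univ_finsuppAntidiag hτ, Nat.cast_add_one] at hweight
  calc ((q : ℝ) + 1) * ((∑ t, c t) * (n / (q + 1) - (d - 1)) *
          (standardExponents τ d (n + (d - 1))).card)
      = (∑ t, c t) * ((n - (q + 1) * (d - 1)) *
          ∑ i ∈ Finset.range d, ((n + (d - 1) - i + q).choose q : ℝ)) := by
        rw [card_standardExponents hτ, Nat.cast_sum]
        field_simp
    _ ≤ (∑ t, c t) * ∑ i ∈ Finset.range d, (n - i : ℕ) * ((n - i + q).choose q : ℝ) :=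
        mul_le_mul_of_nonneg_left (sub_mul_sum_choose_add_le q hd)
          (Finset.sum_nonneg fun t _ ↦ hc t)
    _ = (q + 1) * ∑ j ∈ standardExponents τ d n, ∑ t, (j.2 t : ℝ) * c t := by
        rw [standardExponents, Finset.sum_sigma, Finset.mul_sum, Finset.mul_sum]
        exact Finset.sum_congr rfl fun i _ ↦ (hweight i).symm

end StandardExponents

section Hypersurface

open Submodule MvPolynomial DirectSum Topology
open scoped Nat
open Polynomial (aeval derivative)

variable {k S τ : Type*} [Field k] [CommRing S] [Algebra k S] [Algebra (MvPolynomial τ k) S]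

/-- The monomial `x ^ i * y ^ m` with exponent `j = (i, m)`, where `y t` is the image of the
variable `X t` in `S`. -/
noncomputable def standardMonomial (k : Type*) [Field k] [Algebra (MvPolynomial τ k) S]
    (x : S) (j : Σ _ : ℕ, τ →₀ ℕ) : S :=
  monomial j.2 (1 : k) • x ^ j.1

/-- The homogeneous part of degree `n` of a polynomial over `k[X t | t]` whose variable is
given degree one. -/
noncomputable def homogeneousPart (n : ℕ) (p : Polynomial (MvPolynomial τ k)) :
    Polynomial (MvPolynomial τ k) :=
  ∑ i ∈ Finset.range (n + 1), .monomial i (homogeneousComponent (n - i) (p.coeff i))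

theorem coeff_homogeneousPart (n : ℕ) (p : Polynomial (MvPolynomial τ k)) (i : ℕ) :
    (homogeneousPart n p).coeff i =
      if i ≤ n then homogeneousComponent (n - i) (p.coeff i) else 0 := by
  simp [homogeneousPart, Polynomial.finsetSum_coeff, Polynomial.coeff_monomial]

theorem natDegree_homogeneousPart_le (n : ℕ) (p : Polynomial (MvPolynomial τ k)) :
    (homogeneousPart n p).natDegree ≤ n := by
  rw [Polynomial.natDegree_le_iff_coeff_eq_zero]
  exact fun i hi ↦ (coeff_homogeneousPart n p i).trans (if_neg hi.not_ge)

theorem homogeneousPart_add (n : ℕ) (p p' : Polynomial (MvPolynomial τ k)) :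
    homogeneousPart n (p + p') = homogeneousPart n p + homogeneousPart n p' := by
  simp [homogeneousPart, Finset.sum_add_distrib]

theorem homogeneousPart_monomial (n i : ℕ) (a : MvPolynomial τ k) :
    homogeneousPart n (.monomial i a) =
      if i ≤ n then .monomial i (homogeneousComponent (n - i) a) else 0 := by
  ext1 j
  obtain rfl | hij := eq_or_ne i j
  · split_ifs with h <;> simp [coeff_homogeneousPart, h]
  · split_ifs <;> simp [coeff_homogeneousPart, Polynomial.coeff_monomial, hij]

theorem derivative_homogeneousPart_add_one (n : ℕ) (p : Polynomial (MvPolynomial τ k)) :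
    derivative (homogeneousPart (n + 1) p) = homogeneousPart n (derivative p) := by
  ext1 i
  rw [Polynomial.coeff_derivative, coeff_homogeneousPart, coeff_homogeneousPart,
    Polynomial.coeff_derivative, ← Nat.cast_add_one, mul_comm, ← nsmul_eq_mul, mul_comm,
    ← nsmul_eq_mul, map_nsmul, Nat.add_sub_add_right, smul_ite, smul_zero]
  simp only [Nat.add_le_add_iff_right]

theorem monic_homogeneousPart_natDegree {p : Polynomial (MvPolynomial τ k)} (hp : p.Monic) :
    (homogeneousPart p.natDegree p).Monic := by
  refine Polynomial.monic_of_natDegree_le_of_coeff_eq_one p.natDegree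
    (natDegree_homogeneousPart_le _ p) ?_
  rw [coeff_homogeneousPart, if_pos le_rfl, hp.coeff_natDegree, Nat.sub_self,
    homogeneousComponent_zero, coeff_zero_one, C_1]

section

variable [IsScalarTower k (MvPolynomial τ k) S] {𝒮 : ℕ → Submodule k S} [GradedAlgebra 𝒮]
  (hX : ∀ t, algebraMap (MvPolynomial τ k) S (X t) ∈ 𝒮 1) {x : S} (hx : x ∈ 𝒮 1)
include hX hx

theorem smul_pow_mem_of_isHomogeneous {a : MvPolynomial τ k} {n : ℕ} (ha : a.IsHomogeneous n)
    (i : ℕ) : a • x ^ i ∈ 𝒮 (n + i) := by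
  rw [Algebra.smul_def]
  exact SetLike.mul_mem_graded
    (mem_of_isHomogeneous (f := IsScalarTower.toAlgHom k (MvPolynomial τ k) S) hX ha)
    (by simpa using SetLike.pow_mem_graded i hx)

theorem aeval_homogeneousPart (n : ℕ) (p : Polynomial (MvPolynomial τ k)) :
    aeval x (homogeneousPart n p) = decompose 𝒮 (aeval x p) n := by
  induction p using Polynomial.induction_on' with
  | add p p' hp hp' => rw [homogeneousPart_add, map_add, map_add, decompose_add, hp, hp']; rfl
  | monomial i a =>
    have hxi : x ^ i ∈ 𝒮 i := by simpa using SetLike.pow_mem_graded i hx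
    rw [homogeneousPart_monomial, Polynomial.aeval_monomial,
      coe_decompose_mul_of_right_mem 𝒮 n hxi]
    split_ifs
    · rw [Polynomial.aeval_monomial, ← IsScalarTower.coe_toAlgHom' k, coe_decompose_apply hX]
    · exact map_zero _

variable [IsDomain S] [FaithfulSMul (MvPolynomial τ k) S]

theorem homogeneousPart_minpoly (hint : IsIntegral (MvPolynomial τ k) x) :
    homogeneousPart (minpoly (MvPolynomial τ k) x).natDegree (minpoly (MvPolynomial τ k) x) =
      minpoly (MvPolynomial τ k) x := by
  refine minpoly.IsIntegrallyClosed.unique_of_degree_le_degree_minpoly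
    (monic_homogeneousPart_natDegree (minpoly.monic hint)) ?_ ?_
  · rw [aeval_homogeneousPart hX hx, minpoly.aeval, decompose_zero]
    rfl
  · rw [Polynomial.degree_eq_natDegree (minpoly.ne_zero hint)]
    exact Polynomial.natDegree_le_iff_degree_le.1 (natDegree_homogeneousPart_le _ _)

theorem aeval_derivative_minpoly_mem (hint : IsIntegral (MvPolynomial τ k) x) :
    aeval x (derivative (minpoly (MvPolynomial τ k) x)) ∈
      𝒮 ((minpoly (MvPolynomial τ k) x).natDegree - 1) := by
  obtain ⟨e, he⟩ := Nat.exists_eq_add_one.2 (minpoly.natDegree_pos hint)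
  rw [he, Nat.add_sub_cancel, ← homogeneousPart_minpoly hX hx hint, he,
    derivative_homogeneousPart_add_one, aeval_homogeneousPart hX hx]
  exact SetLike.coe_mem _

end
section

variable {x : S}

theorem linearIndependent_pow_of_isIntegral {A : Type*} [CommRing A] [IsDomain A]
    [IsIntegrallyClosed A] [Algebra A S] [IsDomain S] [FaithfulSMul A S] (hx : IsIntegral A x) :
    LinearIndependent A fun i : Fin (minpoly A x).natDegree ↦ x ^ (i : ℕ) := by
  rw [Fintype.linearIndependent_iff]
  intro g hg i
  have hzero : ∑ i, Polynomial.C (g i) * Polynomial.X ^ (i : ℕ) = 0 := by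
    by_contra hne
    refine (Polynomial.degree_sum_fin_lt g).not_ge ?_
    rw [← Polynomial.degree_eq_natDegree (minpoly.ne_zero hx)]
    exact minpoly.IsIntegrallyClosed.degree_le_of_ne_zero hne (by simpa [Algebra.smul_def] using hg)
  simpa [Polynomial.finsetSum_coeff, Polynomial.coeff_X_pow, Fin.val_inj] using
    congr(($hzero).coeff i)

variable [IsScalarTower k (MvPolynomial τ k) S]

section

variable [Fintype τ] [DecidableEq τ]

variable {d : ℕ} (hd : (minpoly (MvPolynomial τ k) x).natDegree = d)
  (hint : IsIntegral (MvPolynomial τ k) x)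

include hd hint in
theorem linearIndepOn_standardMonomial [IsDomain S] [FaithfulSMul (MvPolynomial τ k) S] (n : ℕ) :
    LinearIndepOn k (standardMonomial (τ := τ) k x) (standardExponents τ d n) := by
  subst hd
  have hli := linearIndependent_smul (basisMonomials τ k).linearIndependent
    (linearIndependent_pow_of_isIntegral hint)
  let index (j : standardExponents τ (minpoly (MvPolynomial τ k) x).natDegree n) :
      (τ →₀ ℕ) × Fin (minpoly (MvPolynomial τ k) x).natDegree :=
    (j.1.2, ⟨j.1.1, (mem_standardExponents.1 j.2).1⟩)
  have hindex : Function.Injective index := by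
    rintro ⟨⟨i, m⟩, _⟩ ⟨⟨i', m'⟩, _⟩ h
    simpa [index, and_comm] using h
  have hcomp := hli.comp index hindex
  simp only [coe_basisMonomials] at hcomp
  exact hcomp

theorem smul_pow_mem_span_standardMonomial {a : MvPolynomial τ k} {n i : ℕ} (hi : i < d)
    (ha : a.IsHomogeneous (n - i)) :
    a • x ^ i ∈ span k (standardMonomial (τ := τ) k x '' standardExponents τ d n) := by
  have hle : homogeneousSubmodule τ k (n - i) ≤
      (span k (standardMonomial (τ := τ) k x '' standardExponents τ d n)).comap
        ((LinearMap.toSpanSingleton (MvPolynomial τ k) S (x ^ i)).restrictScalars k) := by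
    rw [homogeneousSubmodule_eq_span_monomial, span_le]
    rintro _ ⟨m, hm, rfl⟩
    exact subset_span ⟨⟨i, m⟩, mem_standardExponents.2 ⟨hi, hm⟩, rfl⟩
  exact hle ha

variable {𝒮 : ℕ → Submodule k S} [GradedAlgebra 𝒮]
  (hX : ∀ t, algebraMap (MvPolynomial τ k) S (X t) ∈ 𝒮 1) (hx : x ∈ 𝒮 1)
include hX hx

theorem standardMonomial_mem {d n : ℕ} (hd : d ≤ n + 1) {j : Σ _ : ℕ, τ →₀ ℕ}
    (hj : j ∈ standardExponents τ d n) : standardMonomial k x j ∈ 𝒮 n := by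
  obtain ⟨hjd, hjn⟩ := mem_standardExponents.1 hj
  have hmem := smul_pow_mem_of_isHomogeneous hX hx (isHomogeneous_monomial (1 : k) hjn) j.1
  rwa [Nat.sub_add_cancel (by lia)] at hmem

include hd hint in
theorem mem_span_standardMonomial_of_mem_adjoin [Nontrivial S] {n : ℕ} {s : S} (hs : s ∈ 𝒮 n)
    (hsx : s ∈ Algebra.adjoin (MvPolynomial τ k) {x}) :
    s ∈ span k (standardMonomial (τ := τ) k x '' standardExponents τ d n) := by
  obtain ⟨p, rfl⟩ := Algebra.adjoin_mem_exists_aeval _ _ hsx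
  have hrem : aeval x p = aeval x (p %ₘ minpoly (MvPolynomial τ k) x) := by
    conv_lhs => rw [← Polynomial.modByMonic_add_div p (minpoly (MvPolynomial τ k) x)]
    rw [map_add, map_mul, minpoly.aeval, zero_mul, add_zero]
  rw [← decompose_of_mem_same 𝒮 hs, hrem, ← aeval_homogeneousPart hX hx, homogeneousPart, map_sum]
  refine sum_mem fun i _ ↦ ?_
  obtain h | h := eq_or_ne ((p %ₘ minpoly (MvPolynomial τ k) x).coeff i) 0
  · simp [h]
  have hi : i < d := hd ▸ (Polynomial.le_natDegree_of_ne_zero h).trans_lt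
    (Polynomial.natDegree_modByMonic_lt _ (minpoly.monic hint) (minpoly.ne_one _ _))
  rw [Polynomial.aeval_monomial, ← Algebra.smul_def]
  exact smul_pow_mem_span_standardMonomial hi (homogeneousComponent_isHomogeneous _ _)

variable [IsDomain S] [FaithfulSMul (MvPolynomial τ k) S]
include hd hint

theorem finrank_le_card_standardExponents [CharZero k]
    (hadj : ∀ s, aeval x (derivative (minpoly (MvPolynomial τ k) x)) * s ∈
      Algebra.adjoin (MvPolynomial τ k) {x}) (n : ℕ) :
    Module.finrank k (𝒮 n) ≤ (standardExponents τ d (n + (d - 1))).card := by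
  classical
  let D := aeval x (derivative (minpoly (MvPolynomial τ k) x))
  have hD : D ∈ 𝒮 (d - 1) := hd ▸ aeval_derivative_minpoly_mem hX hx hint
  have hinj : Function.Injective (LinearMap.mulLeft k D) :=
    mul_right_injective₀ (aeval_derivative_minpoly_ne_zero hint)
  have hle : (𝒮 n).map (LinearMap.mulLeft k D) ≤ span k ((standardExponents τ d (n + (d - 1))).image
      (standardMonomial (τ := τ) k x) : Set S) := by
    rintro _ ⟨s, hs, rfl⟩
    rw [Finset.coe_image]
    refine mem_span_standardMonomial_of_mem_adjoin hd hint hX hx ?_ (hadj s)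
    exact add_comm n (d - 1) ▸ SetLike.mul_mem_graded hD hs
  calc Module.finrank k (𝒮 n) = Module.finrank k ((𝒮 n).map (LinearMap.mulLeft k D)) :=
        LinearEquiv.finrank_eq (equivMapOfInjective _ hinj _)
    _ ≤ _ := (finrank_mono hle).trans ((finrank_span_finset_le_card _).trans Finset.card_image_le)

variable [∀ n, FiniteDimensional k (𝒮 n)]

theorem card_standardExponents_le_finrank {n : ℕ} (hn : d ≤ n + 1) :
    (standardExponents τ d n).card ≤ Module.finrank k (𝒮 n) := by
  have hli := linearIndepOn_standardMonomial hd hint n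
  have hle : span k (Set.range fun j : standardExponents τ d n ↦ standardMonomial k x j.1) ≤ 𝒮 n :=
    span_le.2 (Set.range_subset_iff.2 fun j ↦ standardMonomial_mem hX hx hn j.2)
  calc (standardExponents τ d n).card = _ := (Fintype.card_coe _).symm
    _ = _ := (finrank_span_eq_card hli).symm
    _ ≤ _ := finrank_mono hle

omit [DecidableEq τ] in
theorem natDegree_minpoly_le_of_tendsto_finrank {q : ℕ} (hτ : Fintype.card τ = q + 1) {Δ : ℝ}
    (hHilb : Tendsto (fun n : ℕ ↦ (q ! : ℝ) * Module.finrank k (𝒮 n) / (n : ℝ) ^ q) atTop (𝓝 Δ)) :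
    d ≤ Δ := by
  classical
  have hlim : Tendsto (fun n : ℕ ↦ ∑ i ∈ Finset.range d, (q ! : ℝ) * (n - i + q).choose q / n ^ q)
      atTop (𝓝 d) := by
    simpa using tendsto_finsetSum (Finset.range d)
      fun i _ ↦ tendsto_factorial_mul_choose_div_pow q i
  refine le_of_tendsto_of_tendsto hlim hHilb ?_
  filter_upwards [eventually_ge_atTop d] with n hn
  rw [← Finset.sum_div, ← Finset.mul_sum]
  gcongr
  exact_mod_cast card_standardExponents hτ d n ▸
    card_standardExponents_le_finrank hd hint hX hx (hn.trans n.le_succ)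

end

end

end Hypersurface

section GradedDomain

open Submodule MvPolynomial Topology
open scoped Nat

theorem exists_sum_smul_linearIndepOn_and_finrank_le {k S σ τ : Type*} [Field k] [CharZero k]
    [CommRing S] [IsDomain S] [Algebra k S] {𝒮 : ℕ → Submodule k S} [GradedAlgebra 𝒮]
    [∀ n, FiniteDimensional k (𝒮 n)] [Fintype σ] [Fintype τ] [DecidableEq τ]
    {f : MvPolynomial τ k →ₐ[k] S} (hX : ∀ t, f (X t) ∈ 𝒮 1) {E : ℕ}
    (hE : ∀ n > E, ∀ s ∈ 𝒮 n, s ∈ Ideal.span (Set.range fun t ↦ f (X t)))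
    {q : ℕ} (hτ : Fintype.card τ = q + 1) {Δ : ℝ} (hΔ : Δ ≠ 0)
    (hHilb : Tendsto (fun n : ℕ ↦ (q ! : ℝ) * Module.finrank k (𝒮 n) / n ^ q) atTop (𝓝 Δ))
    {y : σ → S} (hy : ∀ i, y i ∈ 𝒮 1) (hadj : Algebra.adjoin k (Set.range y) = ⊤) :
    ∃ (d : ℕ) (c : σ → k), (d : ℝ) ≤ Δ ∧ ∀ n,
      LinearIndepOn k (fun j : Σ _ : ℕ, τ →₀ ℕ ↦ f (monomial j.2 1) * (∑ i, c i • y i) ^ j.1)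
        (standardExponents τ d n) ∧
      Module.finrank k (𝒮 n) ≤ (standardExponents τ d (n + (d - 1))).card := by
  let _ := f.toRingHom.toAlgebra
  have : IsScalarTower k (MvPolynomial τ k) S := .of_algebraMap_eq' f.comp_algebraMap.symm
  have : Module.Finite (MvPolynomial τ k) S := finite_of_forall_mem_span hX hE
  have : FaithfulSMul (MvPolynomial τ k) S :=
    (faithfulSMul_iff_algebraMap_injective _ _).2 (injective_of_tendsto_finrank hX hE hτ hΔ hHilb)
  have hadj' : Algebra.adjoin (MvPolynomial τ k) (Set.range y) = ⊤ := by
    refine top_le_iff.1 fun s _ ↦ ?_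
    have hle : Algebra.adjoin k (Set.range y) ≤
        (Algebra.adjoin (MvPolynomial τ k) (Set.range y)).restrictScalars k :=
      Algebra.adjoin_le Algebra.subset_adjoin
    exact hle (hadj ▸ Algebra.mem_top)
  obtain ⟨c, hc⟩ := exists_aeval_derivative_minpoly_sum_smul_mul_mem_adjoin (k := k) hadj'
  have hx : ∑ i, c i • y i ∈ 𝒮 1 := sum_mem fun i _ ↦ smul_mem _ _ (hy i)
  have hint : IsIntegral (MvPolynomial τ k) (∑ i, c i • y i) := Algebra.IsIntegral.isIntegral _
  refine ⟨_, c, natDegree_minpoly_le_of_tendsto_finrank rfl hint hX hx hτ hHilb, fun n ↦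
    ⟨linearIndepOn_standardMonomial rfl hint n,
      finrank_le_card_standardExponents rfl hint hX hx hc n⟩⟩

end GradedDomain

section CoordinateRing

open Submodule MvPolynomial DirectSum Topology
open scoped Nat

variable {k σ : Type*} [Field k]

theorem exists_isHomogeneous_mem_of_forall_eval_eq_zero [IsAlgClosed k] [Finite σ]
    {J : Ideal (MvPolynomial σ k)} (hJ : ∀ x : σ → k, (∀ p ∈ J, eval x p = 0) → x = 0) :
    ∃ E, ∀ n ≥ E, ∀ p : MvPolynomial σ k, p.IsHomogeneous n → p ∈ J := by
  have hrad : Ideal.span (Set.range X) ≤ J.radical := by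
    rw [← vanishingIdeal_zeroLocus_eq_radical (K := k), Ideal.span_le]
    rintro _ ⟨i, rfl⟩ x hx
    simp [hJ x fun p hp ↦ by simpa [aeval_eq_eval] using hx p hp]
  obtain ⟨E, hE⟩ := Ideal.exists_pow_le_of_le_radical_of_fg hrad (IsNoetherian.noetherian _)
  refine ⟨E, fun n hn p hp ↦ hE (Ideal.pow_le_pow_right hn ?_)⟩
  exact (Ideal.mem_span_pow_iff_exists_isHomogeneous (n := n) X p).2
    ⟨map C p, hp.map C, by rw [eval_map]; exact eval₂_eta p⟩

variable (I : Ideal (MvPolynomial σ k))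

/-- The image in the coordinate ring `k[σ]/I` of the forms of degree `n`. For homogeneous `I`
this is the standard grading of the coordinate ring. -/
noncomputable def coordinateRingPiece (n : ℕ) : Submodule k (MvPolynomial σ k ⧸ I) :=
  (homogeneousSubmodule σ k n).map (Ideal.Quotient.mkₐ k I).toLinearMap

variable {I}

instance [Finite σ] (n : ℕ) : FiniteDimensional k (coordinateRingPiece I n) :=
  Module.Finite.map _ _

theorem mk_mem_coordinateRingPiece {p : MvPolynomial σ k} {n : ℕ} (hp : p.IsHomogeneous n) :
    Ideal.Quotient.mk I p ∈ coordinateRingPiece I n :=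
  ⟨p, hp, rfl⟩

theorem homogeneousComponent_coeLinearMap (n : ℕ) (p : ⨁ n, homogeneousSubmodule σ k n) :
    homogeneousComponent n (coeLinearMap (homogeneousSubmodule σ k) p) = p n := by
  induction p using DirectSum.induction_on with
  | zero => simp
  | of m p =>
    rw [coeLinearMap_of, homogeneousComponent_of_mem p.2, DirectSum.coe_of_apply]
    split_ifs with h h' h' <;> [rfl; exact (h' h.symm).elim; exact (h h'.symm).elim; rfl]
  | add p p' hp hp' => simp [hp, hp']

theorem isInternal_coordinateRingPiece (hI : ∀ p ∈ I, ∀ n, homogeneousComponent n p ∈ I) :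
    IsInternal (coordinateRingPiece I) := by
  constructor
  · intro s s' hs
    let π (n : ℕ) : homogeneousSubmodule σ k n →ₗ[k] coordinateRingPiece I n :=
      (Ideal.Quotient.mkₐ k I).toLinearMap.restrict fun _ ↦ mem_map_of_mem
    have hπ (n) : Function.Surjective (π n) := by
      rintro ⟨_, p, hp, rfl⟩
      exact ⟨⟨p, hp⟩, rfl⟩
    obtain ⟨p, rfl⟩ := (lmap_surjective π).2 hπ s
    obtain ⟨p', rfl⟩ := (lmap_surjective π).2 hπ s'
    have hmk : coeLinearMap (coordinateRingPiece I) ∘ₗ lmap π =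
        (Ideal.Quotient.mkₐ k I).toLinearMap ∘ₗ coeLinearMap (homogeneousSubmodule σ k) := by
      ext n p
      simp only [LinearMap.comp_apply, lmap_lof, coeLinearMap_lof]
      rfl
    have hsub : coeLinearMap (homogeneousSubmodule σ k) p -
        coeLinearMap (homogeneousSubmodule σ k) p' ∈ I :=
      Ideal.Quotient.eq.1
        ((LinearMap.congr_fun hmk p).symm.trans (hs.trans (LinearMap.congr_fun hmk p')))
    refine (lmap_eq_iff π p p').2 fun n ↦ Subtype.ext (Ideal.Quotient.eq.2 ?_)
    have hsub_n := hI _ hsub n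
    rwa [map_sub, homogeneousComponent_coeLinearMap, homogeneousComponent_coeLinearMap] at hsub_n
  · intro s
    obtain ⟨p, rfl⟩ := Ideal.Quotient.mk_surjective s
    rw [← sum_homogeneousComponent p, map_sum]
    refine sum_mem (S := AddMonoidHom.mrange _) fun n _ ↦ ?_
    exact ⟨of (fun n ↦ coordinateRingPiece I n) n
      ⟨_, mk_mem_coordinateRingPiece (homogeneousComponent_isHomogeneous n p)⟩,
      DirectSum.coeAddMonoidHom_of _ _ _⟩

/-- The grading of the coordinate ring of a homogeneous ideal by `coordinateRingPiece`. -/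
noncomputable abbrev coordinateRingGradedAlgebra
    (hI : ∀ p ∈ I, ∀ n, homogeneousComponent n p ∈ I) : GradedAlgebra (coordinateRingPiece I) where
  one_mem := mk_mem_coordinateRingPiece (isHomogeneous_one σ k)
  mul_mem _ _ := by
    rintro _ _ ⟨p, hp, rfl⟩ ⟨p', hp', rfl⟩
    exact mk_mem_coordinateRingPiece (IsHomogeneous.mul hp hp')
  toDecomposition := (isInternal_coordinateRingPiece hI).chooseDecomposition

theorem adjoin_range_mk_X :
    Algebra.adjoin k (Set.range fun i ↦ Ideal.Quotient.mk I (X i : MvPolynomial σ k)) = ⊤ := by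
  change Algebra.adjoin k (Set.range (Ideal.Quotient.mkₐ k I ∘ X)) = ⊤
  rw [Set.range_comp, ← AlgHom.map_adjoin, adjoin_range_X, Algebra.map_top,
    AlgHom.range_eq_top]
  exact Ideal.Quotient.mkₐ_surjective k I

theorem monomial_mul_mem_span_monomial {m : σ →₀ ℕ} {i n : ℕ} {p : MvPolynomial σ k}
    (hp : p.IsHomogeneous i) (hn : m.degree + i = n) :
    monomial m 1 * p ∈ span k ((monomial · 1) '' {a | a.degree = n ∧ m ≤ a}) := by
  have hle : homogeneousSubmodule σ k i ≤
      (span k ((monomial · 1) '' {a | a.degree = n ∧ m ≤ a})).comap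
        (LinearMap.mulLeft k (monomial m (1 : k))) := by
    rw [homogeneousSubmodule_eq_span_monomial, span_le]
    rintro _ ⟨b, rfl, rfl⟩
    refine subset_span ⟨m + b, ⟨by rw [map_add, hn], self_le_add_right m b⟩, ?_⟩
    simp [monomial_mul]
  exact hle hp

theorem exists_forall_mem_span_X_comp [IsAlgClosed k] [Finite σ] {τ : Type*} {ι : τ → σ}
    (hι : ∀ x : σ → k, (∀ p ∈ I, eval x p = 0) → (∀ t, x (ι t) = 0) → x = 0) :
    ∃ E, ∀ n > E, ∀ s ∈ coordinateRingPiece I n,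
      s ∈ Ideal.span (Set.range fun t ↦ Ideal.Quotient.mk I (X (ι t) : MvPolynomial σ k)) := by
  let J := I ⊔ Ideal.span (Set.range fun t ↦ (X (ι t) : MvPolynomial σ k))
  obtain ⟨E, hE⟩ := exists_isHomogeneous_mem_of_forall_eval_eq_zero (J := J) fun x hx ↦
    hι x (fun p hp ↦ hx p (le_sup_left (a := I) hp)) fun t ↦ by
      simpa using hx _ (le_sup_right (a := I) (subset_span ⟨t, rfl⟩))
  refine ⟨E, ?_⟩
  rintro n hn _ ⟨p, hp, rfl⟩
  have hmap := Ideal.mem_map_of_mem (Ideal.Quotient.mk I) (hE n hn.le p hp)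
  rwa [Ideal.map_sup, Ideal.map_quotient_self, bot_sup_eq, Ideal.map_span, ← Set.range_comp]
    at hmap

theorem exists_linearForm_linearIndepOn_and_finrank_le [IsAlgClosed k] [CharZero k] [Finite σ]
    {τ : Type*} [Fintype τ] [DecidableEq τ] {ι : τ → σ}
    (hI : ∀ p ∈ I, ∀ n, homogeneousComponent n p ∈ I) (hI' : I.IsPrime)
    (hι : ∀ x : σ → k, (∀ p ∈ I, eval x p = 0) → (∀ t, x (ι t) = 0) → x = 0)
    {q : ℕ} (hτ : Fintype.card τ = q + 1) {Δ : ℝ} (hΔ : Δ ≠ 0)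
    (hHilb : Tendsto (fun n : ℕ ↦ (q ! : ℝ) * Module.finrank k (coordinateRingPiece I n) / n ^ q)
      atTop (𝓝 Δ)) :
    ∃ (d : ℕ) (ℓ : MvPolynomial σ k), (d : ℝ) ≤ Δ ∧ ℓ.IsHomogeneous 1 ∧ ∀ n,
      LinearIndepOn k (fun j : Σ _ : ℕ, τ →₀ ℕ ↦
        Ideal.Quotient.mk I (monomial (j.2.mapDomain ι) 1 * ℓ ^ j.1)) (standardExponents τ d n) ∧
      Module.finrank k (coordinateRingPiece I n) ≤ (standardExponents τ d (n + (d - 1))).card := by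
  cases nonempty_fintype σ
  have : IsDomain (MvPolynomial σ k ⧸ I) := Ideal.Quotient.isDomain I
  let _ := coordinateRingGradedAlgebra hI
  let f : MvPolynomial τ k →ₐ[k] MvPolynomial σ k ⧸ I := (Ideal.Quotient.mkₐ k I).comp (rename ι)
  have hfX (t : τ) : f (X t) = Ideal.Quotient.mk I (X (ι t)) := by simp [f]
  have hy (i : σ) : Ideal.Quotient.mk I (X i) ∈ coordinateRingPiece I 1 :=
    mk_mem_coordinateRingPiece (isHomogeneous_X k i)
  obtain ⟨E, hE⟩ := exists_forall_mem_span_X_comp hι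
  simp only [← hfX] at hE
  obtain ⟨d, c, hd, hc⟩ := exists_sum_smul_linearIndepOn_and_finrank_le
    (fun t ↦ hfX t ▸ hy (ι t)) hE hτ hΔ hHilb hy adjoin_range_mk_X
  refine ⟨d, ∑ i, c i • X i, hd,
    sum_mem (S := homogeneousSubmodule σ k 1) fun i _ ↦ smul_mem _ _ (isHomogeneous_X k i), ?_⟩
  have hmk (j : Σ _ : ℕ, τ →₀ ℕ) :
      f (monomial j.2 1) * (∑ i, c i • Ideal.Quotient.mk I (X i)) ^ j.1 =
        Ideal.Quotient.mk I (monomial (j.2.mapDomain ι) 1 * (∑ i, c i • X i) ^ j.1) := by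
    simp only [map_mul, map_pow, f, AlgHom.comp_apply, rename_monomial]
    rw [← Ideal.Quotient.mkₐ_eq_mk k, map_sum]
    simp only [map_smul]
  simp only [hmk] at hc
  exact hc

end CoordinateRing

section HilbertWeight

open Submodule MvPolynomial Topology
open scoped Nat

variable {r : ℕ} {I : Ideal (MvPolynomial (Fin r) ℂ)}

theorem map_restrictScalarsEquiv_gradedPiece (n : ℕ) :
    (gradedPiece I n).map (Quotient.restrictScalarsEquiv ℂ I).toLinearMap =
      coordinateRingPiece I n := by
  rw [gradedPiece, ← map_comp]
  rfl

theorem finrank_coordinateRingPiece (n : ℕ) :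
    Module.finrank ℂ (coordinateRingPiece I n) = hilbertFn I n := by
  rw [← map_restrictScalarsEquiv_gradedPiece]
  exact LinearEquiv.finrank_map_eq (Quotient.restrictScalarsEquiv ℂ I) _

theorem isMonomialBasis_of_linearIndepOn_of_span_eq {n : ℕ} {A : Finset (Fin r →₀ ℕ)}
    (hdeg : A ⊆ Finset.univ.finsuppAntidiag n)
    (hli : LinearIndepOn ℂ (fun a ↦ Ideal.Quotient.mk I (monomial a 1)) (A : Set (Fin r →₀ ℕ)))
    (hspan : span ℂ ((fun a ↦ Ideal.Quotient.mk I (monomial a 1)) '' A) =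
      coordinateRingPiece I n) : IsMonomialBasis I n A := by
  refine ⟨fun a ha ↦ (Finset.mem_finsuppAntidiag.1 (hdeg ha)).1,
    LinearIndependent.of_comp (Quotient.restrictScalarsEquiv ℂ I).toLinearMap hli, ?_⟩
  apply map_injective_of_injective (f := (Quotient.restrictScalarsEquiv ℂ I).toLinearMap)
    (Quotient.restrictScalarsEquiv ℂ I).injective
  rw [map_restrictScalarsEquiv_gradedPiece, ← hspan, map_span, Set.image_image]
  rfl

theorem le_hilbertWeight_of_isMonomialBasis {n : ℕ} {A : Finset (Fin r →₀ ℕ)}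
    (hA : IsMonomialBasis I n A) (c : Fin r → ℝ) :
    ∑ a ∈ A, ∑ i, (a i : ℝ) * c i ≤ hilbertWeight I n c := by
  refine le_csSup (Set.Finite.bddAbove (Set.Finite.subset
    (((Finset.univ.finsuppAntidiag n).powerset.image
      fun A : Finset (Fin r →₀ ℕ) ↦ ∑ a ∈ A, ∑ i, (a i : ℝ) * c i).finite_toSet) ?_)) ⟨A, hA, rfl⟩
  rintro _ ⟨B, hB, rfl⟩
  exact Finset.mem_image_of_mem _ (Finset.mem_powerset.2 fun a ha ↦
    Finset.mem_finsuppAntidiag.2 ⟨hB.1 a ha, Finset.subset_univ _⟩)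

theorem hilbertWeight_nonneg {c : Fin r → ℝ} (hc : ∀ i, 0 ≤ c i) (n : ℕ) :
    0 ≤ hilbertWeight I n c := by
  refine Real.sSup_nonneg ?_
  rintro _ ⟨A, -, rfl⟩
  exact Finset.sum_nonneg fun a _ ↦ Finset.sum_nonneg fun i _ ↦ mul_nonneg (a i).cast_nonneg (hc i)

theorem sum_le_hilbertWeight {κ : Type*} {c : Fin r → ℝ} (hc : ∀ i, 0 ≤ c i) {n : ℕ}
    {K : Finset κ} {e : κ → MvPolynomial (Fin r) ℂ ⧸ I} {u : κ → ℝ} (he : LinearIndepOn ℂ e K)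
    (hspan : ∀ j ∈ K, e j ∈ span ℂ ((fun a ↦ Ideal.Quotient.mk I (monomial a 1)) ''
      {a | a.degree = n ∧ u j ≤ ∑ i, (a i : ℝ) * c i})) :
    ∑ j ∈ K, u j ≤ hilbertWeight I n c := by
  simp only [← mem_univ_finsuppAntidiag_iff_degree_eq] at hspan
  obtain ⟨B, hBM, hBli, hBspan, hB⟩ := exists_linearIndepOn_span_eq_sum_le
    (fun a _ ↦ Finset.sum_nonneg fun i _ ↦ mul_nonneg (a i).cast_nonneg (hc i)) he hspan
  refine hB.trans (le_hilbertWeight_of_isMonomialBasis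
    (isMonomialBasis_of_linearIndepOn_of_span_eq hBM hBli (hBspan.trans ?_)) c)
  have hM : ((Finset.univ.finsuppAntidiag n : Finset (Fin r →₀ ℕ)) : Set (Fin r →₀ ℕ)) =
      {a | a.degree = n} := Set.ext fun _ ↦ mem_univ_finsuppAntidiag_iff_degree_eq
  rw [coordinateRingPiece, homogeneousSubmodule_eq_span_monomial, map_span, Set.image_image, hM]
  rfl

theorem sum_mul_comp_le_of_mapDomain_le {σ τ : Type*} [Fintype σ] [Fintype τ] {ι : τ → σ}
    {c : σ → ℝ} (hc : ∀ i, 0 ≤ c i) {m : τ →₀ ℕ} {a : σ →₀ ℕ} (h : m.mapDomain ι ≤ a) :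
    ∑ t, (m t : ℝ) * c (ι t) ≤ ∑ i, (a i : ℝ) * c i := by
  calc ∑ t, (m t : ℝ) * c (ι t) = ∑ i, ((m.mapDomain ι) i : ℝ) * c i := by
        rw [← Finsupp.sum_fintype m (fun t b ↦ (b : ℝ) * c (ι t)) (by simp),
          ← Finsupp.sum_fintype (m.mapDomain ι) (fun i b ↦ (b : ℝ) * c i) (by simp),
          Finsupp.sum_mapDomain_index (by simp) (by simp [add_mul])]
    _ ≤ ∑ i, (a i : ℝ) * c i := by
        gcongr with i
        · exact hc i
        · exact h i

theorem sum_standardExponents_le_hilbertWeight {τ : Type*} [Fintype τ] [DecidableEq τ]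
    {ι : τ → Fin r} {c : Fin r → ℝ} (hc : ∀ i, 0 ≤ c i) {d N : ℕ} (hd : d ≤ N + 1)
    {ℓ : MvPolynomial (Fin r) ℂ} (hℓ : ℓ.IsHomogeneous 1)
    (hli : LinearIndepOn ℂ (fun j : Σ _ : ℕ, τ →₀ ℕ ↦
      Ideal.Quotient.mk I (monomial (j.2.mapDomain ι) 1 * ℓ ^ j.1)) (standardExponents τ d N)) :
    ∑ j ∈ standardExponents τ d N, ∑ t, (j.2 t : ℝ) * c (ι t) ≤ hilbertWeight I N c := by
  refine sum_le_hilbertWeight hc hli fun j hj ↦ ?_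
  obtain ⟨hjd, hjN⟩ := mem_standardExponents.1 hj
  have hdeg : (j.2.mapDomain ι).degree + 1 * j.1 = N := by
    rw [Finsupp.degree_mapDomain, hjN, one_mul, Nat.sub_add_cancel (by lia)]
  have hmk := mem_map_of_mem (f := (Ideal.Quotient.mkₐ ℂ I).toLinearMap)
    (monomial_mul_mem_span_monomial (hℓ.pow j.1) hdeg)
  rw [map_span, Set.image_image] at hmk
  refine span_mono ?_ hmk
  rintro _ ⟨a, ⟨ha, hma⟩, rfl⟩
  exact ⟨a, ⟨ha, sum_mul_comp_le_of_mapDomain_le hc hma⟩, rfl⟩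

theorem sum_mul_sub_mul_hilbertFn_le_hilbertWeight {q : ℕ}
    (hIhom : ∀ p ∈ I, ∀ j, homogeneousComponent j p ∈ I) (hIprime : I.IsPrime)
    {Δ : ℝ} (hΔ : Δ ≠ 0)
    (hHilb : Tendsto (fun m : ℕ ↦ (q ! : ℝ) * hilbertFn I m / m ^ q) atTop (𝓝 Δ))
    {T : Finset (Fin r)} (hT : T.card = q + 1)
    (hTI : ∀ x : Fin r → ℂ, (∀ p ∈ I, eval x p = 0) → (∀ j ∈ T, x j = 0) → x = 0)
    {c : Fin r → ℝ} (hc : ∀ i, 0 ≤ c i) (N : ℕ) :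
    (∑ t ∈ T, c t) * (N / (q + 1) - (Δ - 1)) * hilbertFn I N ≤ hilbertWeight I N c := by
  have hcT : 0 ≤ ∑ t ∈ T, c t := Finset.sum_nonneg fun t _ ↦ hc t
  obtain hNΔ | hNΔ := le_or_gt ((N : ℝ) / (q + 1) - (Δ - 1)) 0
  · exact (mul_nonpos_of_nonpos_of_nonneg (mul_nonpos_of_nonneg_of_nonpos hcT hNΔ)
      (Nat.cast_nonneg _)).trans (hilbertWeight_nonneg hc N)
  have hcard : Fintype.card T = q + 1 := (Fintype.card_coe T).trans hT
  obtain ⟨d, ℓ, hdΔ, hℓ, hd⟩ := exists_linearForm_linearIndepOn_and_finrank_le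
    (ι := ((↑) : T → Fin r)) hIhom hIprime (fun x hxI hxT ↦ hTI x hxI fun j hj ↦ hxT ⟨j, hj⟩)
    hcard hΔ (by simpa only [finrank_coordinateRingPiece] using hHilb)
  have hdN : d ≤ N + 1 := by
    have hN : (N : ℝ) / (q + 1) ≤ N := div_le_self N.cast_nonneg (by simp)
    exact_mod_cast (by linarith : (d : ℝ) ≤ N + 1)
  have hrank : (hilbertFn I N : ℝ) ≤ (standardExponents T d (N + (d - 1))).card :=
    mod_cast finrank_coordinateRingPiece (I := I) N ▸ (hd N).2
  calc (∑ t ∈ T, c t) * (N / (q + 1) - (Δ - 1)) * hilbertFn I N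
      ≤ (∑ t ∈ T, c t) * (N / (q + 1) - (Δ - 1)) * (standardExponents T d (N + (d - 1))).card := by
        gcongr
    _ ≤ (∑ t : T, c t) * (N / (q + 1) - (d - 1)) * (standardExponents T d (N + (d - 1))).card := by
        rw [Finset.sum_coe_sort T c]
        gcongr
    _ ≤ ∑ j ∈ standardExponents T d N, ∑ t, (j.2 t : ℝ) * c t :=
        mul_card_standardExponents_le_sum_weight hcard (fun t ↦ hc t) hdN
    _ ≤ hilbertWeight I N c := sum_standardExponents_le_hilbertWeight hc hdN hℓ (hd N).1

theorem hilbert_weight_general_position_estimate_general {q : ℕ} (hq : 1 ≤ q)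
    (hIhom : ∀ p ∈ I, ∀ j, homogeneousComponent j p ∈ I) (hIprime : I.IsPrime)
    {Δ : ℝ} (hΔ : 0 < Δ)
    (hHilb : Tendsto (fun m : ℕ ↦ (q ! : ℝ) * hilbertFn I m / m ^ q) atTop (𝓝 Δ))
    {T : Finset (Fin r)} (hT : T.card = q + 1)
    (hTI : ∀ x : Fin r → ℂ, (∀ p ∈ I, eval x p = 0) → (∀ j ∈ T, x j = 0) → x = 0)
    {c : Fin r → ℝ} (hc : ∀ i, 0 ≤ c i) (hcT : ∑ t ∈ T, c t = q) (N : ℕ) :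
    (q : ℝ) / (q + 1) * N * hilbertFn I N - (2 * q + 1) * Δ * hilbertFn I N ≤
        hilbertWeight I N c ∧
      (1 / ((q : ℝ) + 1) - 1 / r) * N * hilbertFn I N - (2 * q + 1) * Δ / q * hilbertFn I N ≤
        1 / (q : ℝ) * hilbertWeight I N c - N / r * hilbertFn I N := by
  have hfirst : (q : ℝ) / (q + 1) * N * hilbertFn I N - (2 * q + 1) * Δ * hilbertFn I N ≤
      hilbertWeight I N c := by
    calc (q : ℝ) / (q + 1) * N * hilbertFn I N - (2 * q + 1) * Δ * hilbertFn I N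
        = q * (N / (q + 1) - (Δ - 1)) * hilbertFn I N - ((q + 1) * Δ + q) * hilbertFn I N := by ring
      _ ≤ q * (N / (q + 1) - (Δ - 1)) * hilbertFn I N := sub_le_self _ (by positivity)
      _ ≤ hilbertWeight I N c :=
        hcT ▸ sum_mul_sub_mul_hilbertFn_le_hilbertWeight hIhom hIprime hΔ.ne' hHilb hT hTI hc N
  refine ⟨hfirst, ?_⟩
  calc (1 / ((q : ℝ) + 1) - 1 / r) * N * hilbertFn I N - (2 * q + 1) * Δ / q * hilbertFn I N
      = 1 / (q : ℝ) * (q / (q + 1) * N * hilbertFn I N - (2 * q + 1) * Δ * hilbertFn I N) -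
          N / r * hilbertFn I N := by
        field_simp
        ring
    _ ≤ 1 / (q : ℝ) * hilbertWeight I N c - N / r * hilbertFn I N := by gcongr

theorem exists_card_eq_add_one_and_sum_eq {σ : Type*} [Fintype σ] {c : σ → ℝ} {q : ℕ}
    (hq : q + 1 ≤ Fintype.card σ) (hc : ∀ i, c i = 0 ∨ c i = 1)
    (hcq : (Finset.univ.filter fun i ↦ c i = 1).card = q) :
    ∃ T : Finset σ, T.card = q + 1 ∧ ∑ t ∈ T, c t = q := by
  classical
  obtain ⟨i, hi⟩ := Finset.exists_mem_notMem_of_card_lt_card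
    (s := Finset.univ.filter fun i ↦ c i = 1) (t := Finset.univ) (by rwa [hcq, Finset.card_univ])
  refine ⟨insert i (Finset.univ.filter fun i ↦ c i = 1), ?_, ?_⟩
  · rw [Finset.card_insert_of_notMem hi.2, hcq]
  · have hi0 : c i = 0 := (hc i).resolve_right (by simpa using hi.2)
    rw [Finset.sum_insert hi.2, hi0, zero_add, ← hcq, Finset.card_eq_sum_ones, Nat.cast_sum]
    exact Finset.sum_congr rfl fun j hj ↦ by simpa using hj

end HilbertWeight

/-- **the key Hilbert-weight estimate in the proof of Theorem 1.7.**
Let `Y ⊂ ℙ^{r−1}` be a subvariety over `ℂ` of dimension `q` and degree `Δ` (with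
homogeneous prime ideal `I_Y`) such that for every subset `{i_0,…,i_q} ⊂ {1,…,r}` of
size `q+1` one has `Y ∩ {y_{i_0} = 0, …, y_{i_q} = 0} = ∅`.  Let `c⃗ ∈ {0,1}^r` be a
vector with exactly `q` entries equal to `1`.  Then for every integer `N > Δ`:
`S_Y(N, c⃗) ≥ (q/(q+1))·N·H_Y(N) − (2q+1)·Δ·H_Y(N)`, and consequently
`(1/q)·S_Y(N, c⃗) − (N/r)·H_Y(N) ≥ (1/(q+1) − 1/r)·N·H_Y(N) − ((2q+1)Δ/q)·H_Y(N)`. -/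
theorem hilbert_weight_general_position_estimate
    (r q : ℕ) (hq : 1 ≤ q) (hr : q + 1 ≤ r)
    (I : Ideal (MvPolynomial (Fin r) ℂ))
    (hIhom : ∀ p ∈ I, ∀ j : ℕ, MvPolynomial.homogeneousComponent j p ∈ I)
    (hIprime : I.IsPrime)
    (Δ : ℕ) (hΔ : 0 < Δ)
    (hHilb : Tendsto (fun m : ℕ => (Nat.factorial q : ℝ) * (hilbertFn I m : ℝ) / (m : ℝ) ^ q)
      atTop (nhds (Δ : ℝ)))
    (hgen : ∀ s : Finset (Fin r), s.card = q + 1 →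
      ∀ x : Fin r → ℂ, (∀ p ∈ I, MvPolynomial.eval x p = 0) →
        (∀ j ∈ s, x j = 0) → x = 0)
    (c : Fin r → ℝ) (hc01 : ∀ i, c i = 0 ∨ c i = 1)
    (hcq : (Finset.univ.filter fun i => c i = 1).card = q) :
    ∀ N : ℕ, Δ < N →
      ((q : ℝ) / ((q : ℝ) + 1)) * (N : ℝ) * (hilbertFn I N : ℝ)
          - (2 * (q : ℝ) + 1) * (Δ : ℝ) * (hilbertFn I N : ℝ)
        ≤ hilbertWeight I N c ∧
      (1 / ((q : ℝ) + 1) - 1 / (r : ℝ)) * (N : ℝ) * (hilbertFn I N : ℝ)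
          - ((2 * (q : ℝ) + 1) * (Δ : ℝ) / (q : ℝ)) * (hilbertFn I N : ℝ)
        ≤ (1 / (q : ℝ)) * hilbertWeight I N c - ((N : ℝ) / (r : ℝ)) * (hilbertFn I N : ℝ) := by
  intro N _
  obtain ⟨T, hT, hcT⟩ := exists_card_eq_add_one_and_sum_eq (by rwa [Fintype.card_fin]) hc01 hcq
  have hc (i : Fin r) : 0 ≤ c i := by rcases hc01 i with h | h <;> simp [h]
  exact hilbert_weight_general_position_estimate_general hq hIhom hIprime (Nat.cast_pos.2 hΔ)
    hHilb hT (hgen T hT) hc hcT N
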